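/- Let A be a Hopf algebra over an algebraically closed field k and let R be a left or right A-Galois object. If A is cosemisimple and cd(A) is finite, then cd(A) = cd(R). -/

import Mathlib

open TensorProduct CategoryTheory

universe u

namespace QuesProj

/-! ## Projective dimension via Ext -/

/-- The projective dimension of an object of an abelian category with enough projectives:
the supremum of the degrees in which some `Ext` group out of it is nonzero. -/
noncomputable def extPD {C : Type (u+1)} [Category.{u} C] [Abelian C] [EnoughProjectives C]
    (V : C) : ℕ∞ :=
  sSup {n : ℕ∞ | ∃ m : ℕ, n = (m : ℕ∞) ∧
    ∃ W : C, Nontrivial (((Ext ℤ C m).obj (Opposite.op V)).obj W)}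

/-! ## Comodules, comodule algebras and Hopf-Galois objects -/

section Coaction

variable (k : Type u) [Field k]
variable (A : Type u) [AddCommGroup A] [Module k A] [Coalgebra k A]
variable (V : Type u) [AddCommGroup V] [Module k V]

/-- A right `A`-comodule structure on `V`. -/
structure RightCoaction where
  ρ : V →ₗ[k] V ⊗[k] A
  coassoc : (TensorProduct.assoc k V A A).toLinearMap ∘ₗ ρ.rTensor A ∘ₗ ρ
      = (Coalgebra.comul (R := k) (A := A)).lTensor V ∘ₗ ρ
  counit_comp : (TensorProduct.rid k V).toLinearMap ∘ₗ
      (Coalgebra.counit (R := k) (A := A)).lTensor V ∘ₗ ρ = LinearMap.id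

variable {k A V}

/-- A linear map between right comodules is colinear. -/
def IsColinear {W : Type u} [AddCommGroup W] [Module k W]
    (coV : RightCoaction k A V) (coW : RightCoaction k A W) (f : V →ₗ[k] W) : Prop :=
  coW.ρ ∘ₗ f = f.rTensor A ∘ₗ coV.ρ

end Coaction

section ComodAlg

variable (k : Type u) [Field k]
variable (A : Type u) [Ring A] [Bialgebra k A]
variable (R : Type u) [Ring R] [Algebra k R]

/-- A right `A`-comodule algebra structure on `R`. -/
structure RightComodAlg where
  ρ : R →ₗ[k] R ⊗[k] A
  coassoc : (TensorProduct.assoc k R A A).toLinearMap ∘ₗ ρ.rTensor A ∘ₗ ρ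
      = (Coalgebra.comul (R := k) (A := A)).lTensor R ∘ₗ ρ
  counit_comp : (TensorProduct.rid k R).toLinearMap ∘ₗ
      (Coalgebra.counit (R := k) (A := A)).lTensor R ∘ₗ ρ = LinearMap.id
  map_one : ρ 1 = 1
  map_mul : ∀ x y : R, ρ (x * y) = ρ x * ρ y

/-- A left `A`-comodule algebra structure on `R`. -/
structure LeftComodAlg where
  lam : R →ₗ[k] A ⊗[k] R
  coassoc : (TensorProduct.assoc k A A R).toLinearMap ∘ₗ
      (Coalgebra.comul (R := k) (A := A)).rTensor R ∘ₗ lam = lam.lTensor A ∘ₗ lam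
  counit_comp : (TensorProduct.lid k R).toLinearMap ∘ₗ
      (Coalgebra.counit (R := k) (A := A)).rTensor R ∘ₗ lam = LinearMap.id
  map_one : lam 1 = 1
  map_mul : ∀ x y : R, lam (x * y) = lam x * lam y

variable {k A R}

/-- The coaction of a right comodule algebra, as a `RightCoaction`. -/
def RightComodAlg.toCoaction (c : RightComodAlg k A R) : RightCoaction k A R :=
  ⟨c.ρ, c.coassoc, c.counit_comp⟩

/-- The canonical (Galois) map `R ⊗ R → A ⊗ R` of a left comodule algebra,
`x ⊗ y ↦ x₍₋₁₎ ⊗ x₍₀₎y`. -/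
noncomputable def LeftComodAlg.can (c : LeftComodAlg k A R) : R ⊗[k] R →ₗ[k] A ⊗[k] R :=
  (LinearMap.mul' k R).lTensor A ∘ₗ (TensorProduct.assoc k A R R).toLinearMap ∘ₗ
    c.lam.rTensor R

/-- The canonical (Galois) map `R ⊗ R → R ⊗ A` of a right comodule algebra,
`x ⊗ y ↦ xy₍₀₎ ⊗ y₍₁₎`. -/
noncomputable def RightComodAlg.can (c : RightComodAlg k A R) : R ⊗[k] R →ₗ[k] R ⊗[k] A :=
  (LinearMap.mul' k R).rTensor A ∘ₗ (TensorProduct.assoc k R R A).symm.toLinearMap ∘ₗ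
    c.ρ.lTensor R

/-- `R` is a left `A`-Galois object via the left comodule algebra structure `c`:
it is nonzero and the canonical map is bijective. -/
def LeftComodAlg.IsGalois (c : LeftComodAlg k A R) : Prop :=
  Nontrivial R ∧ Function.Bijective c.can

/-- `R` is a right `A`-Galois object via the right comodule algebra structure `c`. -/
def RightComodAlg.IsGalois (c : RightComodAlg k A R) : Prop :=
  Nontrivial R ∧ Function.Bijective c.can

/-- `R` is a left or right `A`-Galois object. -/
def IsGaloisObject (k A R : Type u) [Field k] [Ring A] [Bialgebra k A] [Ring R]
    [Algebra k R] : Prop :=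
  (∃ c : LeftComodAlg k A R, c.IsGalois) ∨ (∃ c : RightComodAlg k A R, c.IsGalois)

end ComodAlg

/-! ## Trivial module, cohomological dimensions, smoothness -/

section Trivial

variable (k : Type u) [Field k] (A : Type u) [Ring A] [Bialgebra k A]

/-- The trivial module of a bialgebra: the base field with action through the counit. -/
def TrivialModule (_A : Type u) : Type u := k

instance : AddCommGroup (TrivialModule k A) := inferInstanceAs (AddCommGroup k)

noncomputable instance : Module A (TrivialModule k A) :=
  Module.compHom k (Bialgebra.counitAlgHom k A).toRingHom

/-- The cohomological dimension of a Hopf algebra: the projective dimension of the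
trivial module. -/
noncomputable def cdHopf : ℕ∞ := extPD (ModuleCat.of A (TrivialModule k A))

end Trivial

section Bimodule

attribute [local instance] TensorProduct.Algebra.module

variable (k : Type u) [Field k] (R : Type u) [Ring R] [Algebra k R]

/-- `k`-scalars commute appropriately with the enveloping algebra action. -/
noncomputable def envTower : IsScalarTower k (R ⊗[k] Rᵐᵒᵖ) R := by
  constructor
  intro c e v
  show TensorProduct.Algebra.moduleAux (c • e) v = c • TensorProduct.Algebra.moduleAux e v
  rw [map_smul]
  rfl

attribute [local instance] envTower

/-- The Hochschild cohomological dimension of a `k`-algebra `R`: the projective dimension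
of `R` in the category of `R`-bimodules, i.e. of modules over `R ⊗ Rᵐᵒᵖ`. -/
noncomputable def cdAlg : ℕ∞ := extPD (ModuleCat.of (R ⊗[k] Rᵐᵒᵖ) R)

/-- `FgProjDimLE S n M` says that the `S`-module `M` admits a resolution
`0 → P_n → ⋯ → P_0 → M → 0` by finitely generated projective `S`-modules. -/
def FgProjDimLE (S : Type u) [Ring S] :
    ℕ → (M : Type u) → [AddCommGroup M] → [Module S M] → Prop
  | 0, M, _, _ => Module.Finite S M ∧ Module.Projective S M
  | (n+1), M, _, _ => ∃ (P : Type u) (_ : AddCommGroup P) (_ : Module S P) (φ : P →ₗ[S] M),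
      Module.Finite S P ∧ Module.Projective S P ∧ Function.Surjective φ ∧
        FgProjDimLE S n (LinearMap.ker φ)

/-- A `k`-algebra `R` is homologically smooth if `R` admits a finite resolution by finitely
generated projective `R`-bimodules. -/
def IsHomSmooth : Prop :=
  ∃ n : ℕ, FgProjDimLE (R ⊗[k] Rᵐᵒᵖ) n R

end Bimodule


/-! ## The trivial coaction and tensor product coactions -/

section UnitTensor

variable (k : Type u) [Field k] (A : Type u) [Ring A] [Bialgebra k A]

/-- The coaction on the monoidal unit `k`. -/
noncomputable def unitCoactMap : k →ₗ[k] k ⊗[k] A :=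
  (Algebra.linearMap k A).lTensor k ∘ₗ (TensorProduct.lid k k).symm.toLinearMap

/-- The trivial right coaction on `k`. -/
noncomputable def unitCoaction : RightCoaction k A k where
  ρ := unitCoactMap k A
  coassoc := by
    unfold unitCoactMap
    apply LinearMap.ext_ring
    simp [Bialgebra.comul_one, Algebra.TensorProduct.one_def]
  counit_comp := by
    unfold unitCoactMap
    apply LinearMap.ext_ring
    simp [Bialgebra.counit_one]

variable {k A}

/-- The canonical coaction on the tensor product of two comodules. -/
noncomputable def tensorCoactMap {V W : Type u} [AddCommGroup V] [Module k V]
    [AddCommGroup W] [Module k W] (ρV : V →ₗ[k] V ⊗[k] A) (ρW : W →ₗ[k] W ⊗[k] A) :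
    V ⊗[k] W →ₗ[k] (V ⊗[k] W) ⊗[k] A :=
  (LinearMap.mul' k A).lTensor (V ⊗[k] W) ∘ₗ
    (TensorProduct.tensorTensorTensorComm k V A W A).toLinearMap ∘ₗ TensorProduct.map ρV ρW

end UnitTensor

/-! ## Haar integrals, modular functionals and averaging -/


section Haar

variable {k : Type u} [Field k] {A : Type u} [Ring A] [HopfAlgebra k A]

/-- Convolution product of two linear functionals on a coalgebra. -/
noncomputable def convF (ψ φ : A →ₗ[k] k) : A →ₗ[k] k :=
  LinearMap.mul' k k ∘ₗ TensorProduct.map ψ φ ∘ₗ Coalgebra.comul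

/-- Convolution `ψ ∗ g` of a functional with a linear endomap. -/
noncomputable def convL (ψ : A →ₗ[k] k) (g : A →ₗ[k] A) : A →ₗ[k] A :=
  (TensorProduct.lid k A).toLinearMap ∘ₗ TensorProduct.map ψ g ∘ₗ Coalgebra.comul

/-- Convolution `g ∗ ψ` of a linear endomap with a functional. -/
noncomputable def convR (g : A →ₗ[k] A) (ψ : A →ₗ[k] k) : A →ₗ[k] A :=
  (TensorProduct.rid k A).toLinearMap ∘ₗ TensorProduct.map g ψ ∘ₗ Coalgebra.comul

/-- `h : A → k` is a Haar integral: `h(a₍₁₎)a₍₂₎ = h(a)1 = h(a₍₂₎)a₍₁₎` and `h(1) = 1`. -/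
structure IsHaar (h : A →ₗ[k] k) : Prop where
  left_inv : (TensorProduct.lid k A).toLinearMap ∘ₗ h.rTensor A ∘ₗ
      (Coalgebra.comul (R := k) (A := A)) = Algebra.linearMap k A ∘ₗ h
  right_inv : (TensorProduct.rid k A).toLinearMap ∘ₗ h.lTensor A ∘ₗ
      (Coalgebra.comul (R := k) (A := A)) = Algebra.linearMap k A ∘ₗ h
  map_one : h 1 = 1

/-- A Hopf algebra is cosemisimple iff it admits a Haar integral. -/
def IsCosemisimple (k : Type u) [Field k] (A : Type u) [Ring A] [HopfAlgebra k A] : Prop :=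
  ∃ h : A →ₗ[k] k, IsHaar h

/-- The modular automorphism `σ = ψ ∗ id ∗ ψ` associated to a functional `ψ`. -/
noncomputable def sigmaOf (ψ : A →ₗ[k] k) : A →ₗ[k] A := convL ψ (convR LinearMap.id ψ)

/-- A modular functional on a cosemisimple Hopf algebra with Haar integral `h`:
a convolution invertible functional `ψ` with `S² = ψ ∗ id ∗ ψ⁻¹`, such that
`σ = ψ ∗ id ∗ ψ` is an algebra automorphism and `h(ab) = h(b σ(a))`. -/
structure ModularFunctional (h : A →ₗ[k] k) : Type u where
  ψ : A →ₗ[k] k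
  ψinv : A →ₗ[k] k
  inv_left : convF ψ ψinv = Coalgebra.counit
  inv_right : convF ψinv ψ = Coalgebra.counit
  antipode_sq : (HopfAlgebra.antipode (R := k) (A := A)) ∘ₗ HopfAlgebra.antipode (R := k) (A := A)
      = convL ψ (convR LinearMap.id ψinv)
  sigma_one : sigmaOf ψ 1 = 1
  sigma_mul : ∀ a b : A, sigmaOf ψ (a * b) = sigmaOf ψ a * sigmaOf ψ b
  sigma_bijective : Function.Bijective (sigmaOf ψ)
  kms : ∀ a b : A, h (a * b) = h (b * sigmaOf ψ a)

variable {V W : Type u} [AddCommGroup V] [Module k V] [AddCommGroup W] [Module k W]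

/-- The averaging of a linear map `f : V → W` between right `A`-comodules with respect to
a linear functional `h` on `A`: `v ↦ h(f(v₍₀₎)₍₁₎ S(v₍₁₎)) f(v₍₀₎)₍₀₎`. -/
noncomputable def avg (ρV : V →ₗ[k] V ⊗[k] A) (ρW : W →ₗ[k] W ⊗[k] A)
    (h : A →ₗ[k] k) (f : V →ₗ[k] W) : V →ₗ[k] W :=
  (TensorProduct.rid k W).toLinearMap ∘ₗ h.lTensor W ∘ₗ (LinearMap.mul' k A).lTensor W ∘ₗ
    (TensorProduct.assoc k W A A).toLinearMap ∘ₗ ρW.rTensor A ∘ₗ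
      (HopfAlgebra.antipode (R := k) (A := A)).lTensor W ∘ₗ f.rTensor A ∘ₗ ρV

/-- The twist `ρ = id ∗ ψ⁻²` of a right comodule (algebra), `x ↦ ψ⁻²(x₍₁₎)x₍₀₎`. -/
noncomputable def comodTwist (φ : A →ₗ[k] k) (ρV : V →ₗ[k] V ⊗[k] A) : V →ₗ[k] V :=
  (TensorProduct.rid k V).toLinearMap ∘ₗ φ.lTensor V ∘ₗ ρV

/-- The twist `θ = ψ² ∗ id : A → A`. -/
noncomputable def thetaOf (φ : A →ₗ[k] k) : A →ₗ[k] A := convL φ LinearMap.id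

end Haar


end QuesProj

open QuesProj

/-!
Let `R` be a left `A`-Galois object and `E = R ⊗ Rᵐᵒᵖ`, a left `A`-comodule algebra through its
first factor. For an `A`-module `V`, the space `V ⊗ R` is an `E`-module through this coaction. The
functor `V ↦ V ⊗ R` is exact, and it sends the trivial module to the bimodule `R`. It sends the free
module `A` to the free module `E`, because `E → A ⊗ R`, `e ↦ e₍₋₁₎ ⊗ e₍₀₎ • 1` is the canonical map
of `R`; so it preserves projectives, and `cd(R) ≤ cd(A)`.

Conversely, the inverse of the canonical map gives an algebra map `A → E` for which `v ↦ v ⊗ 1` is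
`A`-linear. For `V = A` the antipode identifies `A ⊗ R` with a free `A`-module in which `a ⊗ 1` is
unchanged, so `v ↦ v ⊗ 1` is a split monomorphism for free, hence for projective, `V`. By descending
along syzygies, an `A`-module of finite projective dimension has the same projective dimension as
its image. For `R = A` the counit splits `v ↦ v ⊗ 1` for every `V`, so `cd(A)` is also the dimension
of `A` as a bimodule. As bimodules over an algebra and its opposite are the same, this gives
`cd(A) = cd(Aᵒᵖ)`, with the coopposite comultiplication on `Aᵒᵖ`, and right `A`-Galois objects
become left Galois objects over it.
-/

namespace QuesProj

/-! ## Projective dimension under exact functors -/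

section HomologicalAlgebra

open Limits

section Syzygies

variable {C : Type*} [Category* C] [Abelian C] [EnoughProjectives C]

/-- The short exact sequence `0 ⟶ K ⟶ P ⟶ V ⟶ 0` given by the chosen projective presentation of
`V`; its left term is the first syzygy of `V`. -/
noncomputable abbrev syzygySequence (V : C) : ShortComplex C :=
  ShortComplex.mk (kernel.ι (Projective.π V)) (Projective.π V) (kernel.condition _)

lemma syzygySequence_shortExact (V : C) : (syzygySequence V).ShortExact where
  exact := ShortComplex.exact_kernel _

lemma hasProjectiveDimensionLT_iff_syzygy (V : C) (n : ℕ) :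
    HasProjectiveDimensionLT V (n + 2) ↔
      HasProjectiveDimensionLT (syzygySequence V).X₁ (n + 1) :=
  (syzygySequence_shortExact V).hasProjectiveDimensionLT_X₃_iff n inferInstance

end Syzygies

section ExactFunctors

variable {C D : Type*} [Category* C] [Abelian C] [EnoughProjectives C] [Category* D] [Abelian D]
  (F : C ⥤ D) [F.Additive] [PreservesFiniteLimits F] [PreservesFiniteColimits F]
  [F.PreservesProjectiveObjects]

lemma hasProjectiveDimensionLT_obj_iff_syzygy (V : C) (n : ℕ) :
    HasProjectiveDimensionLT (F.obj V) (n + 2) ↔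
      HasProjectiveDimensionLT (F.obj (syzygySequence V).X₁) (n + 1) :=
  ((syzygySequence_shortExact V).map_of_exact F).hasProjectiveDimensionLT_X₃_iff n
    (F.projective_obj (Projective.over V))

lemma hasProjectiveDimensionLT_obj {V : C} {n : ℕ} (hV : HasProjectiveDimensionLT V (n + 1)) :
    HasProjectiveDimensionLT (F.obj V) (n + 1) := by
  induction n generalizing V with
  | zero =>
    rw [← projective_iff_hasProjectiveDimensionLT_one] at hV
    infer_instance
  | succ n ih =>
    rw [hasProjectiveDimensionLT_obj_iff_syzygy]
    exact ih ((hasProjectiveDimensionLT_iff_syzygy V n).1 hV)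

lemma hasProjectiveDimensionLT_of_obj {Q : C → Prop}
    (hsyz : ∀ V, Q V → Q (syzygySequence V).X₁)
    (hproj : ∀ V, Q V → Projective (F.obj V) → Projective V) {V : C} (hQ : Q V) {n : ℕ}
    (hV : HasProjectiveDimensionLT (F.obj V) (n + 1)) : HasProjectiveDimensionLT V (n + 1) := by
  induction n generalizing V with
  | zero =>
    rw [← projective_iff_hasProjectiveDimensionLT_one] at hV ⊢
    exact hproj V hQ hV
  | succ n ih =>
    rw [hasProjectiveDimensionLT_obj_iff_syzygy] at hV
    exact (hasProjectiveDimensionLT_iff_syzygy V n).2 (ih (hsyz V hQ) hV)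

end ExactFunctors

section SplitUnit

variable {C D : Type*} [Category* C] [Abelian C] [Category* D] [Abelian D]
  {F : C ⥤ D} [F.Additive] [PreservesFiniteLimits F] [PreservesFiniteColimits F]
  {T : D ⥤ C} (η : 𝟭 C ⟶ F ⋙ T)

include η

lemma projective_X₃_of_isSplitMono_app {S : ShortComplex C} (hS : S.ShortExact)
    [Projective S.X₂] (hF : Projective (F.obj S.X₃)) (hη : IsSplitMono (η.app S.X₁)) :
    Projective S.X₃ := by
  have : Projective (S.map F).X₃ := hF
  let σ : (S.map F).Splitting := (hS.map_of_exact F).splittingOfProjective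
  obtain ⟨t, ht⟩ : ∃ t : F.obj S.X₂ ⟶ F.obj S.X₁, F.map S.f ≫ t = 𝟙 _ := ⟨σ.r, σ.f_r⟩
  obtain ⟨ρ, hρ⟩ : ∃ ρ : T.obj (F.obj S.X₁) ⟶ S.X₁, η.app S.X₁ ≫ ρ = 𝟙 S.X₁ :=
    ⟨retraction (η.app S.X₁), IsSplitMono.id _⟩
  have hnat : S.f ≫ η.app S.X₂ = η.app S.X₁ ≫ T.map (F.map S.f) := η.naturality S.f
  have hr : S.f ≫ η.app S.X₂ ≫ T.map t ≫ ρ = 𝟙 S.X₁ := by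
    rw [reassoc_of% hnat, ← T.map_comp_assoc, ht, T.map_id, Category.id_comp, hρ]
  let τ : S.Splitting := .ofExactOfRetraction S hS.exact _ hr hS.epi_g
  exact (Retract.mk τ.s S.g τ.s_g).projective

variable [EnoughProjectives C] [F.PreservesProjectiveObjects]

lemma projective_of_projective_obj (hη : ∀ P : C, Projective P → IsSplitMono (η.app P)) {V : C}
    {n : ℕ} (hV : HasProjectiveDimensionLT V (n + 1)) (hFV : Projective (F.obj V)) :
    Projective V := by
  induction n generalizing V with
  | zero => rwa [projective_iff_hasProjectiveDimensionLT_one]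
  | succ n ih =>
    rw [hasProjectiveDimensionLT_iff_syzygy] at hV
    have hFK : Projective (F.obj (syzygySequence V).X₁) := by
      rw [projective_iff_hasProjectiveDimensionLT_one,
        ← zero_add 1, ← hasProjectiveDimensionLT_obj_iff_syzygy]
      exact hasProjectiveDimensionLT_of_ge _ 1 2 one_le_two
    exact projective_X₃_of_isSplitMono_app η (syzygySequence_shortExact V) hFV
      (hη _ (ih hV hFK))

end SplitUnit

section Separators

universe v

variable {C D : Type*} [Category.{v} C] [Category.{v} D]

lemma isSplitMono_app_of_retract {F : C ⥤ C} (η : 𝟭 C ⟶ F) {V W : C} (ρ : Retract V W)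
    (hη : IsSplitMono (η.app W)) : IsSplitMono (η.app V) := by
  have hnat : η.app V ≫ F.map ρ.i = ρ.i ≫ η.app W := (η.naturality ρ.i).symm
  refine .mk' ⟨F.map ρ.i ≫ retraction (η.app W) ≫ ρ.r, ?_⟩
  rw [reassoc_of% hnat, IsSplitMono.id_assoc]
  exact ρ.retract

lemma isSplitMono_app_sigma {F : C ⥤ C} (η : 𝟭 C ⟶ F) {ι : Type*} (X : ι → C)
    [HasCoproduct X] [HasCoproduct fun i => F.obj (X i)]
    [PreservesColimit (Discrete.functor X) F]
    (hη : ∀ i, IsSplitMono (η.app (X i))) : IsSplitMono (η.app (∐ X)) := by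
  let ρ (i : ι) : F.obj (X i) ⟶ X i := retraction (η.app (X i))
  have hρ (i : ι) : η.app (X i) ≫ ρ i = 𝟙 (X i) := IsSplitMono.id _
  have hnat (i : ι) : Sigma.ι X i ≫ η.app (∐ X) = η.app (X i) ≫ F.map (Sigma.ι X i) :=
    η.naturality (Sigma.ι X i)
  have hι (i : ι) : F.map (Sigma.ι X i) ≫ (PreservesCoproduct.iso F X).hom =
      Sigma.ι (fun j => F.obj (X j)) i := by
    rw [← Iso.eq_comp_inv, PreservesCoproduct.inv_hom, ι_comp_sigmaComparison]
  refine .mk' ⟨(PreservesCoproduct.iso F X).hom ≫ Limits.Sigma.map ρ, Sigma.hom_ext _ _ fun i => ?_⟩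
  rw [reassoc_of% hnat, reassoc_of% hι, Sigma.ι_map, reassoc_of% hρ]
  exact (Category.comp_id _).symm

variable [HasCoproducts.{v} C] {G : C} (hG : IsSeparator G)

include hG

lemma nonempty_retract_sigma_of_isSeparator (P : C) [Projective P] :
    Nonempty (Retract P (∐ fun _ : G ⟶ P => G)) := by
  have := (isSeparator_iff_epi G).1 hG P
  exact ⟨⟨Projective.factorThru (𝟙 P) (Sigma.desc fun f : G ⟶ P => f), Sigma.desc fun f => f,
    Projective.factorThru_comp _ _⟩⟩

lemma preservesProjectiveObjects_of_isSeparator [HasCoproducts.{v} D] (F : C ⥤ D)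
    [∀ J : Type v, PreservesColimitsOfShape (Discrete J) F] (hF : Projective (F.obj G)) :
    F.PreservesProjectiveObjects where
  projective_obj {P} _ := by
    obtain ⟨ρ⟩ := nonempty_retract_sigma_of_isSeparator hG P
    have : Projective (F.obj (∐ fun _ : G ⟶ P => G)) :=
      .of_iso (PreservesCoproduct.iso F _).symm inferInstance
    exact (ρ.map F).projective

lemma isSplitMono_app_of_isSeparator {F : C ⥤ C} (η : 𝟭 C ⟶ F)
    [∀ J : Type v, PreservesColimitsOfShape (Discrete J) F] (hη : IsSplitMono (η.app G))
    (P : C) [Projective P] : IsSplitMono (η.app P) := by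
  obtain ⟨ρ⟩ := nonempty_retract_sigma_of_isSeparator hG P
  exact isSplitMono_app_of_retract η ρ (isSplitMono_app_sigma η _ fun _ => hη)

end Separators

section ExtPD

variable {C D : Type (u + 1)} [Category.{u} C] [Abelian C] [EnoughProjectives C]
  [Category.{u} D] [Abelian D] [EnoughProjectives D]

lemma subsingleton_ext_succ_iff [HasExt.{u + 1} C] (V W : C) (m : ℕ) :
    Subsingleton (((Ext ℤ C (m + 1)).obj (Opposite.op V)).obj W) ↔
      Subsingleton (Abelian.Ext V W (m + 1)) := by
  have P : ProjectiveResolution V := ProjectiveResolution.of V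
  have hcocycles : Subsingleton (((Ext ℤ C (m + 1)).obj (Opposite.op V)).obj W) ↔
      ∀ f : P.complex.X (m + 1) ⟶ W, P.complex.d (m + 2) (m + 1) ≫ f = 0 →
        ∃ g, P.complex.d (m + 1) m ≫ g = f := by
    rw [← ModuleCat.isZero_iff_subsingleton, (P.isoExt (R := ℤ) (m + 1) W).isZero_iff,
      ← HomologicalComplex.exactAt_iff_isZero_homology,
      HomologicalComplex.exactAt_iff' _ m (m + 1) (m + 2) (by simp) (by simp),
      ShortComplex.moduleCat_exact_iff]
    rfl
  rw [hcocycles]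
  constructor
  · intro h
    refine subsingleton_of_forall_eq 0 fun α => ?_
    obtain ⟨f, hf, rfl⟩ := P.extMk_surjective α (m + 2) rfl
    exact (P.extMk_eq_zero_iff f (m + 2) rfl hf m rfl).2 (h f hf)
  · intro h f hf
    exact (P.extMk_eq_zero_iff f (m + 2) rfl hf m rfl).1 (Subsingleton.elim _ _)

lemma extPD_le_iff (V : C) (n : ℕ) : extPD V ≤ n ↔ HasProjectiveDimensionLT V (n + 1) := by
  let := HasExt.standard.{u} C
  rw [extPD, sSup_le_iff, hasProjectiveDimensionLT_iff]
  constructor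
  · rintro h (_ | m) hm W α
    · omega
    · have : Subsingleton (Abelian.Ext V W (m + 1)) := by
        rw [← subsingleton_ext_succ_iff, ← not_nontrivial_iff_subsingleton]
        intro hW
        have := h _ ⟨m + 1, rfl, W, hW⟩
        norm_cast at this
        omega
      exact Subsingleton.elim _ _
  · rintro h _ ⟨m, rfl, W, hW⟩
    rw [Nat.cast_le]
    by_contra! hm
    obtain ⟨m, rfl⟩ : ∃ m', m = m' + 1 := ⟨m - 1, by omega⟩
    rw [← not_subsingleton_iff_nontrivial, subsingleton_ext_succ_iff] at hW
    exact hW (subsingleton_of_forall_eq 0 fun α => h _ hm α)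

lemma extPD_le_extPD_iff {V : C} {W : D} :
    extPD V ≤ extPD W ↔
      ∀ n : ℕ, HasProjectiveDimensionLT W (n + 1) → HasProjectiveDimensionLT V (n + 1) := by
  simp only [← extPD_le_iff]
  refine ⟨fun h n hW => h.trans hW, fun h => le_of_forall_ge fun c hc => ?_⟩
  cases c with
  | top => exact le_top
  | coe n => exact h n hc

lemma extPD_eq_of_iso {V W : C} (e : V ≅ W) : extPD V = extPD W :=
  le_antisymm
    (extPD_le_extPD_iff.2 fun _ _ => hasProjectiveDimensionLT_of_iso e.symm _)
    (extPD_le_extPD_iff.2 fun _ _ => hasProjectiveDimensionLT_of_iso e _)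

lemma extPD_obj_le (F : C ⥤ D) [F.Additive] [PreservesFiniteLimits F]
    [PreservesFiniteColimits F] [F.PreservesProjectiveObjects] (V : C) :
    extPD (F.obj V) ≤ extPD V :=
  extPD_le_extPD_iff.2 fun _ => hasProjectiveDimensionLT_obj F

lemma extPD_obj_equivalence (e : C ≌ D) (V : C) : extPD (e.functor.obj V) = extPD V := by
  have : e.functor.Additive := Functor.additive_of_preserves_binary_products _
  have : e.inverse.Additive := Functor.additive_of_preserves_binary_products _
  have : e.functor.PreservesProjectiveObjects :=
    Functor.preservesProjectiveObjects_of_adjunction_of_preservesEpimorphisms e.toAdjunction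
  have : e.inverse.PreservesProjectiveObjects :=
    Functor.preservesProjectiveObjects_of_adjunction_of_preservesEpimorphisms e.symm.toAdjunction
  exact (extPD_obj_le e.functor V).antisymm
    ((extPD_eq_of_iso (e.unitIso.app V)).trans_le (extPD_obj_le e.inverse (e.functor.obj V)))

variable {F : C ⥤ D} [F.Additive] [PreservesFiniteLimits F]
  [PreservesFiniteColimits F] [F.PreservesProjectiveObjects]
  {T : D ⥤ C} (η : 𝟭 C ⟶ F ⋙ T)

include η

lemma extPD_obj_of_isSplitMono_app_projective
    (hη : ∀ P : C, Projective P → IsSplitMono (η.app P)) {V : C} (hV : extPD V ≠ ⊤) :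
    extPD (F.obj V) = extPD V := by
  refine le_antisymm (extPD_obj_le F V) (extPD_le_extPD_iff.2 fun n hFV => ?_)
  let Q (W : C) : Prop := ∃ m : ℕ, HasProjectiveDimensionLT W (m + 1)
  have hsyz (W : C) : Q W → Q (syzygySequence W).X₁ := by
    rintro ⟨m, hm⟩
    exact ⟨m, (hasProjectiveDimensionLT_iff_syzygy W m).1
      (hasProjectiveDimensionLT_of_ge _ (m + 1) (m + 2) (by omega))⟩
  have hproj (W : C) : Q W → Projective (F.obj W) → Projective W := by
    rintro ⟨m, hm⟩ hFW
    exact projective_of_projective_obj η hη hm hFW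
  obtain ⟨m, hm⟩ := ENat.ne_top_iff_exists.1 hV
  exact hasProjectiveDimensionLT_of_obj F hsyz hproj ⟨m, (extPD_le_iff V m).1 hm.ge⟩ hFV

lemma extPD_obj_of_isSplitMono_app (hη : ∀ V : C, IsSplitMono (η.app V)) (V : C) :
    extPD (F.obj V) = extPD V := by
  refine le_antisymm (extPD_obj_le F V) (extPD_le_extPD_iff.2 fun n hFV => ?_)
  refine hasProjectiveDimensionLT_of_obj F (Q := fun _ => True) (fun _ _ => trivial)
    (fun W _ hFW => ?_) trivial hFV
  exact projective_X₃_of_isSplitMono_app η (syzygySequence_shortExact W) hFW (hη _)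

end ExtPD

end HomologicalAlgebra

/-! ## Induction along a comodule algebra -/

open scoped ModuleCat.Algebra

instance preservesLimits_restrictScalars {S T : Type u} [Ring S] [Ring T] (f : S →+* T) :
    Limits.PreservesLimits (ModuleCat.restrictScalars.{u} f) :=
  ⟨⟨inferInstance⟩⟩

namespace LeftComodAlg

section TensorAct

variable (k A E V M : Type u) [Field k] [Ring A] [Algebra k A] [Ring E] [Algebra k E]
  [AddCommGroup V] [Module k V] [Module A V] [IsScalarTower k A V]
  [AddCommGroup M] [Module k M] [Module E M] [IsScalarTower k E M]

/-- The action of `A ⊗ E` on `V ⊗ M`. -/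
noncomputable def tensorAct : A ⊗[k] E →ₐ[k] Module.End k (V ⊗[k] M) :=
  (Module.endTensorEndAlgHom (R := k) (A := k) (M := V) (N := M)).comp
    (Algebra.TensorProduct.map (Algebra.lsmul k k V) (Algebra.lsmul k k M))

variable {V M}

@[simp]
lemma tensorAct_tmul (a : A) (e : E) (v : V) (y : M) :
    tensorAct k A E V M (a ⊗ₜ e) (v ⊗ₜ y) = (a • v) ⊗ₜ (e • y) := rfl

variable {k A E} in
lemma tensorAct_rTensor {W : Type u} [AddCommGroup W] [Module k W] [Module A W]
    [IsScalarTower k A W] (φ : V →ₗ[A] W) (t : A ⊗[k] E) (x : V ⊗[k] M) :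
    tensorAct k A E W M t ((φ.restrictScalars k).rTensor M x) =
      (φ.restrictScalars k).rTensor M (tensorAct k A E V M t x) := by
  induction t with
  | zero => simp
  | add t t' h h' => simp only [map_add, LinearMap.add_apply, h, h']
  | tmul a e =>
    induction x with
    | zero => simp
    | add x x' h h' => simp only [map_add, h, h']
    | tmul v y => simp

end TensorAct

section Induction

variable {k A E : Type u} [Field k] [Ring A] [Bialgebra k A] [Ring E] [Algebra k E]
  (d : LeftComodAlg k A E)

/-- The coaction of a left comodule algebra, as an algebra map. -/
noncomputable def lamAlgHom : E →ₐ[k] A ⊗[k] E := AlgHom.ofLinearMap d.lam d.map_one d.map_mul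

/-- For an `A`-module `V` and an `E`-module `M`, the space `V ⊗ M`, on which `E` acts through its
coaction: `e • (v ⊗ y) = e₍₋₁₎v ⊗ e₍₀₎y`. It is a type synonym, so that this action does not compete
with the one on the first tensor factor. -/
def Ind (_d : LeftComodAlg k A E) (V M : Type u) [AddCommGroup V] [Module k V]
    [AddCommGroup M] [Module k M] : Type u := V ⊗[k] M

section Module

variable (V M : Type u) [AddCommGroup V] [Module k V] [AddCommGroup M] [Module k M]

instance : AddCommGroup (d.Ind V M) := inferInstanceAs (AddCommGroup (V ⊗[k] M))

noncomputable instance : Module k (d.Ind V M) := inferInstanceAs (Module k (V ⊗[k] M))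

variable {V M} in
/-- The pure tensors of `Ind V M`. -/
noncomputable def tmul (v : V) (y : M) : d.Ind V M := (v ⊗ₜ[k] y : V ⊗[k] M)

variable [Module A V] [IsScalarTower k A V] [Module E M] [IsScalarTower k E M]

noncomputable instance : Module E (d.Ind V M) :=
  Module.compHom (V ⊗[k] M) ((tensorAct k A E V M).comp d.lamAlgHom).toRingHom

lemma smul_def (e : E) (x : d.Ind V M) : e • x = tensorAct k A E V M (d.lam e) x := rfl

lemma algebraMap_smul (c : k) (x : d.Ind V M) : algebraMap k E c • x = c • x := by
  change (tensorAct k A E V M).comp d.lamAlgHom (algebraMap k E c) x = _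
  rw [AlgHom.commutes]
  rfl

variable {V} {W : Type u} [AddCommGroup W] [Module k W] [Module A W] [IsScalarTower k A W]

/-- Functoriality of `Ind V M` in `V`. -/
noncomputable def indMap (φ : V →ₗ[A] W) : d.Ind V M →ₗ[E] d.Ind W M where
  toFun x := (φ.restrictScalars k).rTensor M x
  map_add' _ _ := _root_.map_add _ _ _
  map_smul' _ _ := (tensorAct_rTensor φ _ _).symm

lemma indMap_id : d.indMap M (LinearMap.id : V →ₗ[A] V) = LinearMap.id :=
  LinearMap.ext <| LinearMap.rTensor_id_apply M V

lemma indMap_comp {X : Type u} [AddCommGroup X] [Module k X] [Module A X] [IsScalarTower k A X]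
    (ψ : W →ₗ[A] X) (φ : V →ₗ[A] W) : d.indMap M (ψ ∘ₗ φ) = d.indMap M ψ ∘ₗ d.indMap M φ :=
  LinearMap.ext <| LinearMap.rTensor_comp_apply M (ψ.restrictScalars k) (φ.restrictScalars k)

/-- Isomorphism invariance of `Ind V M` in `V`. The isomorphism need not be `k`-linear for the given
actions of `k`, so `Ind V M` does not depend on the choice of such an action. -/
noncomputable def indCongr (φ : V ≃ₗ[A] W) : d.Ind V M ≃ₗ[E] d.Ind W M :=
  .ofLinearMap (d.indMap M φ.toLinearMap) (d.indMap M φ.symm.toLinearMap)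
    (by rw [← indMap_comp, LinearEquiv.comp_symm, indMap_id])
    (by rw [← indMap_comp, LinearEquiv.symm_comp, indMap_id])

end Module

section Functor

variable (M : Type u) [AddCommGroup M] [Module k M] [Module E M] [IsScalarTower k E M]

/-- The functor `V ↦ V ⊗ M` from `A`-modules to `E`-modules. -/
noncomputable def indFunctor : ModuleCat.{u} A ⥤ ModuleCat.{u} E where
  obj V := ModuleCat.of E (d.Ind V M)
  map φ := ModuleCat.ofHom (d.indMap M φ.hom)
  map_id _ := ModuleCat.hom_ext (d.indMap_id M)
  map_comp φ ψ := ModuleCat.hom_ext (d.indMap_comp M ψ.hom φ.hom)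

/-- The object `Ind V M`, with `V` replaced by an isomorphic module carrying its own action
of `k`. -/
noncomputable def indFunctorObjIso (V : ModuleCat.{u} A) {W : Type u} [AddCommGroup W] [Module k W]
    [Module A W] [IsScalarTower k A W] (φ : V ≃ₗ[A] W) :
    (d.indFunctor M).obj V ≅ ModuleCat.of E (d.Ind W M) :=
  (d.indCongr M φ).toModuleIso

/-- The underlying vector space of `Ind V M` is a tensor product of vector spaces. -/
noncomputable def indFunctorCompRestrictScalarsIso :
    d.indFunctor M ⋙ ModuleCat.restrictScalars (algebraMap k E) ≅
      ModuleCat.restrictScalars (algebraMap k A) ⋙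
        MonoidalCategory.tensorRight (ModuleCat.of k M) :=
  NatIso.ofComponents
    (fun V => LinearEquiv.toModuleIso
      { AddEquiv.refl (V ⊗[k] M) with
        map_smul' := fun c x => d.algebraMap_smul V M c x })
    fun _ => rfl

instance : Limits.PreservesColimits (d.indFunctor M) := by
  have : Limits.PreservesColimits (MonoidalCategory.tensorRight (ModuleCat.of k M)) :=
    Limits.preservesColimits_of_natIso (BraidedCategory.tensorLeftIsoTensorRight _)
  have := Limits.preservesColimits_of_natIso (d.indFunctorCompRestrictScalarsIso M).symm
  have : Limits.ReflectsColimits (ModuleCat.restrictScalars.{u} (algebraMap k E)) :=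
    Limits.reflectsColimits_of_reflectsIsomorphisms
  exact Limits.preservesColimits_of_reflects_of_preserves (d.indFunctor M)
    (ModuleCat.restrictScalars (algebraMap k E))

instance : Limits.PreservesFiniteLimits (d.indFunctor M) := by
  have (S : Type u) [Ring S] (f : k →+* S) :
      Limits.PreservesFiniteLimits (ModuleCat.restrictScalars.{u} f) :=
    Limits.PreservesLimits.preservesFiniteLimits _
  have := Limits.preservesFiniteLimits_of_natIso (d.indFunctorCompRestrictScalarsIso M).symm
  have : Limits.ReflectsFiniteLimits (ModuleCat.restrictScalars.{u} (algebraMap k E)) :=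
    inferInstance
  exact Limits.preservesFiniteLimits_of_reflects_of_preserves (d.indFunctor M)
    (ModuleCat.restrictScalars (algebraMap k E))

end Functor

end Induction

end LeftComodAlg

/-! ## Shears and convolution -/

section Shear

variable {k C M : Type*} [CommSemiring k] [AddCommMonoid C] [Module k C] [Coalgebra k C]
  [AddCommMonoid M] [Module k M]

/-- The endomorphism `c ⊗ y ↦ c₍₁₎ ⊗ j(c₍₂₎)y` of `C ⊗ M` given by `j : C → End M`. -/
noncomputable def shearMap (j : C →ₗ[k] Module.End k M) : Module.End k (C ⊗[k] M) :=
  (TensorProduct.lift j).lTensor C ∘ₗ (TensorProduct.assoc k C C M).toLinearMap ∘ₗ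
    (Coalgebra.comul (R := k) (A := C)).rTensor M

lemma shearMap_tmul (j : C →ₗ[k] Module.End k M) (c : C) (y : M) :
    shearMap j (c ⊗ₜ y) = (j.flip y).lTensor C (Coalgebra.comul (R := k) c) := by
  simp only [shearMap, LinearMap.comp_apply, LinearMap.rTensor_tmul, LinearEquiv.coe_coe]
  induction Coalgebra.comul (R := k) c with
  | zero => simp
  | add t t' h h' => simp only [TensorProduct.add_tmul, map_add, h, h']
  | tmul b c => simp

lemma shearMap_one : shearMap (1 : WithConv (C →ₗ[k] Module.End k M)).ofConv = 1 := by
  refine TensorProduct.ext' fun c y => ?_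
  have hflip : (1 : WithConv (C →ₗ[k] Module.End k M)).ofConv.flip y =
      LinearMap.toSpanSingleton k M y ∘ₗ Coalgebra.counit := by
    ext c
    simp
  rw [shearMap_tmul, hflip, LinearMap.lTensor_comp_apply, Coalgebra.lTensor_counit_comul]
  simp

lemma shearMap_mul (i j : WithConv (C →ₗ[k] Module.End k M)) :
    shearMap (i * j).ofConv = shearMap i.ofConv * shearMap j.ofConv := by
  refine TensorProduct.ext' fun c y => ?_
  have hcomp : shearMap i.ofConv ∘ₗ (j.ofConv.flip y).lTensor C =
      ((LinearMap.mul' k _ ∘ₗ TensorProduct.map i.ofConv j.ofConv).flip y).lTensor C ∘ₗ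
        (TensorProduct.assoc k C C C).toLinearMap ∘ₗ Coalgebra.comul.rTensor C := by
    refine TensorProduct.ext' fun b c => ?_
    simp only [LinearMap.comp_apply, LinearMap.lTensor_tmul, LinearMap.rTensor_tmul, shearMap_tmul,
      LinearEquiv.coe_coe]
    induction Coalgebra.comul (R := k) b with
    | zero => simp
    | add t t' h h' => simp only [TensorProduct.add_tmul, map_add, h, h']
    | tmul b b' => simp
  rw [Module.End.mul_apply, shearMap_tmul, shearMap_tmul, ← LinearMap.comp_apply (shearMap _),
    hcomp, LinearMap.comp_apply, LinearMap.comp_apply, LinearEquiv.coe_coe,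
    Coalgebra.coassoc_apply, ← LinearMap.lTensor_comp_apply]
  rfl

/-- Convolution of maps `C → End M` corresponds to composition of shears. -/
noncomputable def shear : WithConv (C →ₗ[k] Module.End k M) →* Module.End k (C ⊗[k] M) where
  toFun j := shearMap j.ofConv
  map_one' := shearMap_one
  map_mul' := shearMap_mul

end Shear

lemma isUnit_toConv_algHom {k A B : Type*} [CommSemiring k] [Semiring A] [HopfAlgebra k A]
    [Semiring B] [Algebra k B] (f : A →ₐ[k] B) : IsUnit (WithConv.toConv f.toLinearMap) := by
  let g : WithConv (A →ₗ[k] B) := .toConv (f.toLinearMap ∘ₗ HopfAlgebra.antipode k)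
  have hone : WithConv.toConv (f.toLinearMap ∘ₗ (1 : WithConv (A →ₗ[k] A)).ofConv) = 1 := by
    ext a
    simp
  refine ⟨⟨_, g, ?_, ?_⟩, rfl⟩
  · have h := congrArg WithConv.toConv (LinearMap.algHom_comp_convMul_distrib f
      (.toConv LinearMap.id) (.toConv (HopfAlgebra.antipode k)))
    rw [LinearMap.id_mul_antipode, hone] at h
    exact h.symm
  · have h := congrArg WithConv.toConv (LinearMap.algHom_comp_convMul_distrib f
      (.toConv (HopfAlgebra.antipode k)) (.toConv LinearMap.id))
    rw [LinearMap.antipode_mul_id, hone] at h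
    exact h.symm

lemma shearMap_bijective {k A M : Type*} [CommSemiring k] [Semiring A] [HopfAlgebra k A]
    [AddCommMonoid M] [Module k M] (f : A →ₐ[k] Module.End k M) :
    Function.Bijective (shearMap f.toLinearMap) :=
  (Module.End.isUnit_iff _).1 ((isUnit_toConv_algHom f).map shear)

/-! ## Galois vectors and the translation map -/

namespace LeftComodAlg

section GaloisVector

variable {k A E : Type u} [Field k] [Ring A] [Bialgebra k A] [Ring E] [Algebra k E]
  (d : LeftComodAlg k A E) {M : Type u} [AddCommGroup M] [Module k M] [Module E M]
  [IsScalarTower k E M] (r : M)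

/-- The canonical map `e ↦ e₍₋₁₎ ⊗ e₍₀₎r` at a vector `r` of an `E`-module. -/
noncomputable def canAt : E →ₗ[k] A ⊗[k] M :=
  ((LinearMap.toSpanSingleton E M r).restrictScalars k).lTensor A ∘ₗ d.lam

/-- The vectors of an `E`-module at which the canonical map is bijective. For the enveloping
algebra `E = R ⊗ Rᵐᵒᵖ` of a comodule algebra and the vector `1` of the module `R`, this is the
Galois condition on `R`. -/
def IsGaloisVector : Prop := Function.Bijective (d.canAt r)

lemma lTensor_canAt_comp_lam :
    (d.canAt r).lTensor A ∘ₗ d.lam = (TensorProduct.assoc k A A M).toLinearMap ∘ₗ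
      (Coalgebra.comul (R := k) (A := A)).rTensor M ∘ₗ d.canAt r := by
  rw [canAt, LinearMap.lTensor_comp, LinearMap.comp_assoc, ← d.coassoc,
    ← LinearMap.comp_assoc d.lam (LinearMap.lTensor _ _) (LinearMap.rTensor _ _),
    LinearMap.rTensor_comp_lTensor,
    ← LinearMap.lTensor_comp_rTensor, LinearMap.lTensor_tensor]
  ext e
  simp

lemma lid_counit_comp_canAt :
    (TensorProduct.lid k M).toLinearMap ∘ₗ (Coalgebra.counit (R := k) (A := A)).rTensor M ∘ₗ
      d.canAt r = (LinearMap.toSpanSingleton E M r).restrictScalars k := by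
  let o : E →ₗ[k] M := (LinearMap.toSpanSingleton E M r).restrictScalars k
  have hnat : (TensorProduct.lid k M).toLinearMap ∘ₗ
      (Coalgebra.counit (R := k) (A := A)).rTensor M ∘ₗ o.lTensor A =
        o ∘ₗ (TensorProduct.lid k E).toLinearMap ∘ₗ Coalgebra.counit.rTensor E :=
    TensorProduct.ext' fun a e => by simp [o]
  calc _ = ((TensorProduct.lid k M).toLinearMap ∘ₗ
        (Coalgebra.counit (R := k) (A := A)).rTensor M ∘ₗ o.lTensor A) ∘ₗ d.lam := rfl
    _ = o ∘ₗ (TensorProduct.lid k E).toLinearMap ∘ₗ Coalgebra.counit.rTensor E ∘ₗ d.lam := by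
      rw [hnat]; rfl
    _ = o := by rw [d.counit_comp, LinearMap.comp_id]

section Action

variable {V : Type u} [AddCommGroup V] [Module k V] [Module A V] [IsScalarTower k A V]

lemma smul_tmul (e : E) (v : V) :
    e • d.tmul v r = d.indMap M (LinearMap.toSpanSingleton A V v) (d.canAt r e) := by
  change tensorAct k A E V M (d.lam e) (v ⊗ₜ r) =
    ((LinearMap.toSpanSingleton A V v).restrictScalars k).rTensor M
      (((LinearMap.toSpanSingleton E M r).restrictScalars k).lTensor A (d.lam e))
  induction d.lam e with
  | zero => simp
  | add t t' h h' => simp only [_root_.map_add, LinearMap.add_apply, h, h']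
  | tmul a e => simp

lemma canAt_eq_smul (e : E) : d.canAt r e = (e • d.tmul (1 : A) r : d.Ind A M) := by
  rw [smul_tmul]
  have hone : LinearMap.toSpanSingleton A A 1 = LinearMap.id := LinearMap.ext fun a => mul_one a
  rw [hone, indMap_id]
  rfl

end Action

namespace IsGaloisVector

variable {d r} (h : d.IsGaloisVector r)

/-- The linear map underlying `translation`. -/
noncomputable def translationLinearMap : A →ₗ[k] E :=
  (LinearEquiv.ofBijective (d.canAt r) h).symm.toLinearMap ∘ₗ (TensorProduct.mk k A M).flip r

lemma canAt_translationLinearMap (a : A) : d.canAt r (h.translationLinearMap a) = a ⊗ₜ r :=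
  (LinearEquiv.ofBijective (d.canAt r) h).apply_symm_apply (a ⊗ₜ r)

lemma translationLinearMap_smul_tmul {V : Type u} [AddCommGroup V] [Module k V] [Module A V]
    [IsScalarTower k A V] (a : A) (v : V) :
    h.translationLinearMap a • d.tmul v r = d.tmul (a • v) r := by
  rw [smul_tmul, canAt_translationLinearMap]
  rfl

lemma translationLinearMap_one : h.translationLinearMap 1 = 1 := by
  apply h.1
  rw [canAt_translationLinearMap, canAt_eq_smul, one_smul]
  rfl

lemma translationLinearMap_mul (a b : A) :
    h.translationLinearMap (a * b) = h.translationLinearMap a * h.translationLinearMap b := by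
  apply h.1
  rw [canAt_translationLinearMap, canAt_eq_smul, mul_smul, translationLinearMap_smul_tmul,
    translationLinearMap_smul_tmul, smul_eq_mul, smul_eq_mul, mul_one]
  rfl

/-- The translation map of a Galois vector `r`: the unique element `e = translation a` satisfies
`e₍₋₁₎ ⊗ e₍₀₎r = a ⊗ r`. -/
noncomputable def translation : A →ₐ[k] E :=
  .ofLinearMap h.translationLinearMap h.translationLinearMap_one h.translationLinearMap_mul

lemma canAt_translation (a : A) : d.canAt r (h.translation a) = a ⊗ₜ r :=
  h.canAt_translationLinearMap a

lemma translation_smul_tmul {V : Type u} [AddCommGroup V] [Module k V] [Module A V]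
    [IsScalarTower k A V] (a : A) (v : V) :
    h.translation a • d.tmul v r = d.tmul (a • v) r :=
  h.translationLinearMap_smul_tmul a v

lemma translation_smul (a : A) : h.translation a • r = Coalgebra.counit (R := k) a • r := by
  have hcounit := LinearMap.congr_fun (d.lid_counit_comp_canAt r) (h.translation a)
  simpa [canAt_translation] using hcounit.symm

lemma lam_translation (a : A) :
    d.lam (h.translation a) =
      h.translation.toLinearMap.lTensor A (Coalgebra.comul (R := k) a) := by
  apply Module.Flat.lTensor_preserves_injective_linearMap (M := A) _ h.1
  have hcan : d.canAt r ∘ₗ h.translation.toLinearMap = (TensorProduct.mk k A M).flip r :=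
    LinearMap.ext h.canAt_translation
  have hassoc (t : A ⊗[k] A) : TensorProduct.assoc k A A M (t ⊗ₜ r) =
      ((TensorProduct.mk k A M).flip r).lTensor A t := by
    induction t with
    | zero => simp
    | add t t' h h' => simp only [TensorProduct.add_tmul, _root_.map_add, h, h']
    | tmul b c => simp
  have hcoassoc := LinearMap.congr_fun (d.lTensor_canAt_comp_lam r) (h.translation a)
  simp only [LinearMap.comp_apply, canAt_translation, LinearMap.rTensor_tmul,
    LinearEquiv.coe_coe, hassoc] at hcoassoc
  rw [hcoassoc, ← LinearMap.lTensor_comp_apply, hcan]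

lemma translation_smul_def {V : Type u} [AddCommGroup V] [Module k V] [Module A V]
    [IsScalarTower k A V] (a : A) (x : d.Ind V M) :
    h.translation a • x = tensorAct k A E V M
      (h.translation.toLinearMap.lTensor A (Coalgebra.comul (R := k) a)) x := by
  rw [smul_def, lam_translation]

/-- The module `Ind A M` is free with basis `1 ⊗ r`. -/
noncomputable def indSelfEquiv : E ≃ₗ[E] d.Ind A M :=
  .ofBijective (LinearMap.toSpanSingleton E (d.Ind A M) (d.tmul 1 r)) <| by
    have hcan : ⇑(LinearMap.toSpanSingleton E (d.Ind A M) (d.tmul 1 r)) = d.canAt r :=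
      (funext (d.canAt_eq_smul r)).symm
    rw [hcan]
    exact h

include h in
lemma projective_indFunctor_obj_self : Projective ((d.indFunctor M).obj (ModuleCat.of A A)) := by
  have hE : Projective (ModuleCat.of E E) := (IsProjective.iff_projective E).1 inferInstance
  exact .of_iso (h.indSelfEquiv.toModuleIso ≪≫
    (d.indFunctorObjIso M (ModuleCat.of A A) (LinearEquiv.refl A A)).symm) hE

/-- The unit `V ⟶ Ind V M`, `v ↦ v ⊗ r`, which is linear over the translation map. -/
noncomputable def unit :
    𝟭 (ModuleCat.{u} A) ⟶
      d.indFunctor M ⋙ ModuleCat.restrictScalars h.translation.toRingHom where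
  app V := ModuleCat.ofHom
    (Y := (ModuleCat.restrictScalars h.translation.toRingHom).obj ((d.indFunctor M).obj V))
    { toFun := fun v => d.tmul v r
      map_add' := fun v w => TensorProduct.add_tmul v w r
      map_smul' := fun a v => (h.translation_smul_tmul a v).symm }
  naturality _ _ _ := rfl

lemma isSplitMono_unit_app {V : ModuleCat.{u} A} (p : d.Ind V M →+ V)
    (hp : ∀ (a : A) (x : d.Ind V M), p (h.translation a • x) = a • p x)
    (hpr : ∀ v : V, p (d.tmul v r) = v) : IsSplitMono (h.unit.app V) := by
  let ρ : (ModuleCat.restrictScalars h.translation.toRingHom).obj ((d.indFunctor M).obj V) ⟶ V :=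
    ModuleCat.ofHom
      (X := (ModuleCat.restrictScalars h.translation.toRingHom).obj ((d.indFunctor M).obj V))
      { p with map_smul' := hp }
  exact .mk' ⟨ρ, ModuleCat.hom_ext <| LinearMap.ext hpr⟩

lemma isSplitMono_unit_app_of_augmentation (φ : M →ₗ[k] k) (hφr : φ r = 1)
    (hφ : ∀ (e : E) (y : M), φ (e • y) = φ (e • r) * φ y) (V : ModuleCat.{u} A) :
    IsSplitMono (h.unit.app V) := by
  have hφt (a : A) (y : M) : φ (h.translation a • y) = Coalgebra.counit (R := k) a * φ y := by
    rw [hφ, translation_smul, map_smul, hφr, smul_eq_mul, mul_one]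
  let p : V ⊗[k] M →ₗ[k] V := (TensorProduct.rid k V).toLinearMap ∘ₗ φ.lTensor V
  have hp (t : A ⊗[k] A) (x : V ⊗[k] M) :
      p (tensorAct k A E V M (h.translation.toLinearMap.lTensor A t) x) =
        TensorProduct.rid k A (Coalgebra.counit.lTensor A t) • p x := by
    induction x with
    | zero => simp
    | add x x' h h' => simp only [_root_.map_add, smul_add, h, h']
    | tmul v y =>
      induction t with
      | zero => simp
      | add t t' h h' => simp only [_root_.map_add, LinearMap.add_apply, add_smul, h, h']
      | tmul b c =>
        simp only [p, LinearMap.lTensor_tmul, tensorAct_tmul, LinearMap.comp_apply,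
          LinearEquiv.coe_coe, TensorProduct.rid_tmul, AlgHom.toLinearMap_apply, hφt, mul_smul,
          smul_assoc, smul_comm (φ y) b v]
  refine h.isSplitMono_unit_app p.toAddMonoidHom (fun a x => ?_) fun v => ?_
  · rw [translation_smul_def]
    refine (hp _ x).trans ?_
    rw [Coalgebra.lTensor_counit_comul, TensorProduct.rid_tmul, one_smul]
    rfl
  · change φ r • v = v
    rw [hφr, one_smul]

end IsGaloisVector

end GaloisVector

end LeftComodAlg

/-! ## Projective dimension of an induced module -/

instance moduleTrivialModule {k A : Type u} [Field k] : Module k (TrivialModule k A) :=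
  inferInstanceAs (Module k k)

instance isScalarTower_trivialModule {k A : Type u} [Field k] [Ring A] [Bialgebra k A] :
    IsScalarTower k A (TrivialModule k A) where
  smul_assoc c a (x : k) := by
    change Coalgebra.counit (R := k) (c • a) * x = c * (Coalgebra.counit (R := k) a * x)
    rw [map_smul, smul_eq_mul, mul_assoc]

lemma isSeparator_self (A : Type u) [Ring A] : IsSeparator (ModuleCat.of A A) := by
  refine (isSeparator_def _).2 fun V W f g hfg => ?_
  ext v
  simpa using congrArg (fun φ => φ.hom 1)
    (hfg (ModuleCat.ofHom (LinearMap.toSpanSingleton A V v)))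

namespace LeftComodAlg

section Bialgebra

variable {k A E : Type u} [Field k] [Ring A] [Bialgebra k A] [Ring E] [Algebra k E]
  (d : LeftComodAlg k A E) (M : Type u) [AddCommGroup M] [Module k M] [Module E M]
  [IsScalarTower k E M]

lemma smul_eq_lTensor_of_smul_eq_counit {V : Type u} [AddCommGroup V] [Module k V] [Module A V]
    [IsScalarTower k A V] (hV : ∀ (a : A) (v : V), a • v = Coalgebra.counit (R := k) a • v)
    (e : E) (x : d.Ind V M) : e • x = (Algebra.lsmul k k M e).lTensor V x := by
  have htensorAct (t : A ⊗[k] E) (x : V ⊗[k] M) : tensorAct k A E V M t x =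
      (Algebra.lsmul k k M (TensorProduct.lid k E (Coalgebra.counit.rTensor E t))).lTensor V x := by
    induction t with
    | zero => simp
    | add t t' h h' =>
      simp only [_root_.map_add, LinearMap.add_apply, LinearMap.lTensor_add, h, h']
    | tmul a e =>
      induction x with
      | zero => simp
      | add x x' h h' => simp only [_root_.map_add, h, h']
      | tmul v y => simp [hV, TensorProduct.smul_tmul]
  have hcounit : TensorProduct.lid k E (Coalgebra.counit.rTensor E (d.lam e)) = e :=
    LinearMap.congr_fun d.counit_comp e
  refine (htensorAct (d.lam e) x).trans ?_
  rw [hcounit]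

/-- Induction sends the trivial module to `M`. -/
noncomputable def indTrivialEquiv : d.Ind (TrivialModule k A) M ≃ₗ[E] M where
  toFun x := TensorProduct.lid k M x
  map_add' _ _ := _root_.map_add _ _ _
  map_smul' e x := by
    rw [smul_eq_lTensor_of_smul_eq_counit d M fun _ _ => rfl]
    have hnat : (TensorProduct.lid k M).toLinearMap ∘ₗ (Algebra.lsmul k k M e).lTensor k =
        Algebra.lsmul k k M e ∘ₗ (TensorProduct.lid k M).toLinearMap :=
      TensorProduct.ext' fun c y => smul_comm c e y
    exact LinearMap.congr_fun hnat x
  invFun := (TensorProduct.lid k M).symm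
  left_inv := (TensorProduct.lid k M).symm_apply_apply
  right_inv := (TensorProduct.lid k M).apply_symm_apply

lemma extPD_indFunctor_obj_trivialModule :
    extPD ((d.indFunctor M).obj (ModuleCat.of A (TrivialModule k A))) =
      extPD (ModuleCat.of E M) :=
  extPD_eq_of_iso <| d.indFunctorObjIso M _ (LinearEquiv.refl A (TrivialModule k A)) ≪≫
    (d.indTrivialEquiv M).toModuleIso

end Bialgebra

namespace IsGaloisVector

variable {k A E : Type u} [Field k] [Ring A] [HopfAlgebra k A] [Ring E] [Algebra k E]
  {d : LeftComodAlg k A E} {M : Type u} [AddCommGroup M] [Module k M] [Module E M]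
  [IsScalarTower k E M] {r : M} (h : d.IsGaloisVector r)

include h in
lemma preservesProjectiveObjects_indFunctor : (d.indFunctor M).PreservesProjectiveObjects :=
  preservesProjectiveObjects_of_isSeparator (isSeparator_self A) _ h.projective_indFunctor_obj_self

include h in
lemma extPD_of_augmentation (φ : M →ₗ[k] k) (hφr : φ r = 1)
    (hφ : ∀ (e : E) (y : M), φ (e • y) = φ (e • r) * φ y) :
    extPD (ModuleCat.of E M) = cdHopf k A := by
  have := h.preservesProjectiveObjects_indFunctor
  have : (d.indFunctor M).Additive := Functor.additive_of_preserves_binary_products _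
  rw [← extPD_indFunctor_obj_trivialModule d M]
  exact extPD_obj_of_isSplitMono_app h.unit (h.isSplitMono_unit_app_of_augmentation φ hφr hφ) _

/-- The linear automorphism `a ⊗ y ↦ translation a • (1 ⊗ y)` of `A ⊗ M`. It turns the action of
`A` on the first tensor factor into its action on `Ind A M` through the translation map. -/
noncomputable def untwist : A ⊗[k] M ≃ₗ[k] d.Ind A M :=
  .ofBijective (shearMap ((Algebra.lsmul k k M).comp h.translation).toLinearMap)
    (shearMap_bijective _)

lemma untwist_tmul (a : A) (y : M) :
    h.untwist (a ⊗ₜ y) = h.translation a • d.tmul (1 : A) y := by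
  rw [translation_smul_def]
  refine (shearMap_tmul _ a y).trans ?_
  change _ = tensorAct k A E A M _ (1 ⊗ₜ y)
  induction Coalgebra.comul (R := k) a with
  | zero => simp
  | add t t' h h' => simp only [_root_.map_add, LinearMap.add_apply, h, h']
  | tmul b c => simp

lemma untwist_smul (a : A) (x : A ⊗[k] M) :
    h.untwist (a • x) = h.translation a • h.untwist x := by
  induction x with
  | zero => simp
  | add x x' h h' => simp only [_root_.map_add, smul_add, h, h']
  | tmul b y =>
    rw [TensorProduct.smul_tmul', untwist_tmul, untwist_tmul, smul_eq_mul, _root_.map_mul, mul_smul]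

lemma untwist_tmul_self (a : A) : h.untwist (a ⊗ₜ r) = d.tmul a r := by
  rw [untwist_tmul, translation_smul_tmul, smul_eq_mul, mul_one]

lemma exists_retraction_self (hr : r ≠ 0) :
    ∃ p : d.Ind A M →+ A, (∀ (a : A) (x : d.Ind A M), p (h.translation a • x) = a • p x) ∧
      ∀ a : A, p (d.tmul a r) = a := by
  obtain ⟨f, hf⟩ := Module.Projective.exists_dual_ne_zero k hr
  let q : A ⊗[k] M →ₗ[A] A :=
    (TensorProduct.AlgebraTensorModule.rid k A A).toLinearMap ∘ₗ
      TensorProduct.AlgebraTensorModule.lTensor A A ((f r)⁻¹ • f)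
  refine ⟨(q : A ⊗[k] M →+ A).comp h.untwist.symm, fun a x => ?_, fun a => ?_⟩
  · have hx : h.untwist.symm (h.translation a • x) = a • h.untwist.symm x := by
      rw [LinearEquiv.symm_apply_eq, untwist_smul, LinearEquiv.apply_symm_apply]
    exact (congrArg q hx).trans (map_smul q a _)
  · have ha : h.untwist.symm (d.tmul a r) = a ⊗ₜ r := by
      rw [LinearEquiv.symm_apply_eq, untwist_tmul_self]
    refine (congrArg q ha).trans ?_
    rw [LinearMap.comp_apply, TensorProduct.AlgebraTensorModule.lTensor_tmul, LinearEquiv.coe_coe,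
      TensorProduct.AlgebraTensorModule.rid_tmul, LinearMap.smul_apply, smul_eq_mul,
      inv_mul_cancel₀ hf, one_smul]

lemma isSplitMono_unit_app_of_linearEquiv {V : ModuleCat.{u} A} {W : Type u} [AddCommGroup W]
    [Module k W] [Module A W] [IsScalarTower k A W] (φ : V ≃ₗ[A] W) (p : d.Ind W M →+ W)
    (hp : ∀ (a : A) (x : d.Ind W M), p (h.translation a • x) = a • p x)
    (hpr : ∀ w : W, p (d.tmul w r) = w) : IsSplitMono (h.unit.app V) := by
  refine h.isSplitMono_unit_app
    ((φ.symm : W →+ V).comp (p.comp (d.indCongr M φ).toLinearMap.toAddMonoidHom))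
    (fun a x => ?_) fun v => φ.symm_apply_eq.2 (hpr (φ v))
  have hsmul := congrArg p (map_smul (d.indCongr M φ) (h.translation a) x)
  exact (congrArg φ.symm (hsmul.trans (hp a _))).trans (map_smul φ.symm a _)

lemma isSplitMono_unit_app_self (hr : r ≠ 0) :
    IsSplitMono (h.unit.app (ModuleCat.of A A)) := by
  obtain ⟨p, hp, hpr⟩ := h.exists_retraction_self hr
  exact h.isSplitMono_unit_app_of_linearEquiv (LinearEquiv.refl A A) p hp hpr

lemma isSplitMono_unit_app_of_projective (hr : r ≠ 0) (P : ModuleCat.{u} A) [Projective P] :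
    IsSplitMono (h.unit.app P) :=
  isSplitMono_app_of_isSeparator (isSeparator_self A) h.unit (h.isSplitMono_unit_app_self hr) P

include h in
lemma extPD_of_cdHopf_ne_top (hr : r ≠ 0) (hA : cdHopf k A ≠ ⊤) :
    extPD (ModuleCat.of E M) = cdHopf k A := by
  have := h.preservesProjectiveObjects_indFunctor
  have : (d.indFunctor M).Additive := Functor.additive_of_preserves_binary_products _
  rw [← extPD_indFunctor_obj_trivialModule d M]
  exact extPD_obj_of_isSplitMono_app_projective h.unit
    (fun P _ => h.isSplitMono_unit_app_of_projective hr P) hA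

end IsGaloisVector

end LeftComodAlg

/-! ## Hochschild dimension of a left Galois object -/

namespace LeftComodAlg

section TensorRight

variable {k A R : Type u} [Field k] [Ring A] [Bialgebra k A] [Ring R] [Algebra k R]
  (d : LeftComodAlg k A R) (B : Type u) [Ring B] [Algebra k B]

/-- The coaction `x ⊗ y ↦ x₍₋₁₎ ⊗ (x₍₀₎ ⊗ y)` on `R ⊗ B`. -/
noncomputable def tensorRightLam : R ⊗[k] B →ₐ[k] A ⊗[k] (R ⊗[k] B) :=
  (Algebra.TensorProduct.assoc k k k A R B).toAlgHom.comp
    (Algebra.TensorProduct.map d.lamAlgHom (.id k B))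

lemma tensorRightLam_tmul (x : R) (y : B) :
    d.tensorRightLam B (x ⊗ₜ y) = TensorProduct.assoc k A R B (d.lam x ⊗ₜ y) := rfl

lemma tensorRightLam_coassoc :
    (TensorProduct.assoc k A A (R ⊗[k] B)).toLinearMap ∘ₗ
      (Coalgebra.comul (R := k) (A := A)).rTensor (R ⊗[k] B) ∘ₗ (d.tensorRightLam B).toLinearMap =
        (d.tensorRightLam B).toLinearMap.lTensor A ∘ₗ (d.tensorRightLam B).toLinearMap := by
  refine TensorProduct.ext' fun x y => ?_
  have hcomul (t : A ⊗[k] R) : TensorProduct.assoc k A A (R ⊗[k] B)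
      (Coalgebra.comul.rTensor (R ⊗[k] B) (TensorProduct.assoc k A R B (t ⊗ₜ y))) =
        (((TensorProduct.mk k R B).flip y).lTensor A).lTensor A
          (TensorProduct.assoc k A A R (Coalgebra.comul.rTensor R t)) := by
    induction t with
    | zero => simp
    | add t t' h h' => simp only [_root_.map_add, TensorProduct.add_tmul, h, h']
    | tmul a z =>
      simp only [TensorProduct.assoc_tmul, LinearMap.rTensor_tmul]
      induction Coalgebra.comul (R := k) a with
      | zero => simp
      | add t t' h h' => simp only [_root_.map_add, TensorProduct.add_tmul, h, h']
      | tmul a b => rfl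
  have hlam (t : A ⊗[k] R) : (d.tensorRightLam B).toLinearMap.lTensor A
      (TensorProduct.assoc k A R B (t ⊗ₜ y)) =
        (((TensorProduct.mk k R B).flip y).lTensor A).lTensor A (d.lam.lTensor A t) := by
    induction t with
    | zero => simp
    | add t t' h h' => simp only [_root_.map_add, TensorProduct.add_tmul, h, h']
    | tmul a z =>
      simp only [TensorProduct.assoc_tmul, LinearMap.lTensor_tmul, AlgHom.toLinearMap_apply,
        tensorRightLam_tmul]
      congr 1
      induction d.lam z with
      | zero => simp
      | add t t' h h' => simp only [_root_.map_add, TensorProduct.add_tmul, h, h']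
      | tmul a b => rfl
  exact (hcomul (d.lam x)).trans <|
    (congrArg _ (LinearMap.congr_fun d.coassoc x)).trans (hlam (d.lam x)).symm

lemma tensorRightLam_counit :
    (TensorProduct.lid k (R ⊗[k] B)).toLinearMap ∘ₗ
      (Coalgebra.counit (R := k) (A := A)).rTensor (R ⊗[k] B) ∘ₗ
        (d.tensorRightLam B).toLinearMap = LinearMap.id := by
  refine TensorProduct.ext' fun x y => ?_
  have hcounit (t : A ⊗[k] R) : TensorProduct.lid k (R ⊗[k] B)
      (Coalgebra.counit.rTensor (R ⊗[k] B) (TensorProduct.assoc k A R B (t ⊗ₜ y))) =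
        TensorProduct.lid k R (Coalgebra.counit.rTensor R t) ⊗ₜ y := by
    induction t with
    | zero => simp
    | add t t' h h' => simp only [_root_.map_add, TensorProduct.add_tmul, h, h']
    | tmul a z => simp [TensorProduct.smul_tmul']
  exact (hcounit (d.lam x)).trans (congrArg (· ⊗ₜ y) (LinearMap.congr_fun d.counit_comp x))

/-- The left comodule algebra `R ⊗ B`. For `B = Rᵐᵒᵖ` it is the enveloping algebra of `R`. -/
noncomputable def tensorRight : LeftComodAlg k A (R ⊗[k] B) where
  lam := (d.tensorRightLam B).toLinearMap
  coassoc := d.tensorRightLam_coassoc B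
  counit_comp := d.tensorRightLam_counit B
  map_one := _root_.map_one (d.tensorRightLam B)
  map_mul := _root_.map_mul (d.tensorRightLam B)

end TensorRight

section Regular

variable (k A : Type u) [Field k] [Ring A]

/-- A bialgebra as a comodule algebra over itself. -/
noncomputable def regular [Bialgebra k A] : LeftComodAlg k A A where
  lam := Coalgebra.comul
  coassoc := Coalgebra.coassoc
  counit_comp := LinearMap.ext fun a => by simp
  map_one := Bialgebra.comul_one
  map_mul := Bialgebra.comul_mul

lemma bijective_can_regular [HopfAlgebra k A] : Function.Bijective (regular k A).can := by
  have hcan : (regular k A).can = shearMap (Algebra.lmul k A).toLinearMap := by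
    refine TensorProduct.ext' fun a b => ?_
    simp only [shearMap_tmul]
    change (LinearMap.mul' k A).lTensor A (TensorProduct.assoc k A A A (Coalgebra.comul a ⊗ₜ b)) = _
    induction Coalgebra.comul (R := k) a with
    | zero => simp
    | add t t' h h' => simp only [_root_.map_add, TensorProduct.add_tmul, h, h']
    | tmul b c => simp
  rw [hcan]
  exact shearMap_bijective _

end Regular

section Envelope

attribute [local instance] TensorProduct.Algebra.module envTower

variable {k A R : Type u} [Field k] [Ring A] [Ring R] [Algebra k R]

lemma env_tmul_smul (x : R) (y : Rᵐᵒᵖ) (z : R) : (x ⊗ₜ[k] y) • z = x * z * y.unop := by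
  rw [TensorProduct.Algebra.smul_def]
  simp [mul_assoc]

lemma canAt_tensorRight_one [Bialgebra k A] (d : LeftComodAlg k A R) :
    (d.tensorRight Rᵐᵒᵖ).canAt (1 : R) =
      d.can ∘ₗ (MulOpposite.opLinearEquiv k).symm.toLinearMap.lTensor R := by
  refine TensorProduct.ext' fun x y => ?_
  simp only [canAt, tensorRight, LinearMap.comp_apply, AlgHom.toLinearMap_apply,
    tensorRightLam_tmul, can, LinearMap.lTensor_tmul, LinearMap.rTensor_tmul, LinearEquiv.coe_coe]
  induction d.lam x with
  | zero => simp
  | add t t' h h' => simp only [_root_.map_add, TensorProduct.add_tmul, h, h']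
  | tmul a z => simp [env_tmul_smul]

lemma isGaloisVector_one [Bialgebra k A] {d : LeftComodAlg k A R} (hd : Function.Bijective d.can) :
    (d.tensorRight Rᵐᵒᵖ).IsGaloisVector (1 : R) := by
  rw [IsGaloisVector, canAt_tensorRight_one]
  exact hd.comp (LinearEquiv.lTensor R (MulOpposite.opLinearEquiv k).symm).bijective

lemma IsGalois.cdAlg_eq_cdHopf_of_ne_top [HopfAlgebra k A] {d : LeftComodAlg k A R}
    (hd : d.IsGalois) (hA : cdHopf k A ≠ ⊤) : cdAlg k R = cdHopf k A := by
  have := hd.1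
  exact (isGaloisVector_one hd.2).extPD_of_cdHopf_ne_top one_ne_zero hA

lemma cdAlg_eq_cdHopf (k A : Type u) [Field k] [Ring A] [HopfAlgebra k A] :
    cdAlg k A = cdHopf k A := by
  refine (isGaloisVector_one (bijective_can_regular k A)).extPD_of_augmentation
    Coalgebra.counit Bialgebra.counit_one fun e y => ?_
  induction e with
  | zero => simp
  | add e e' h h' => simp only [add_smul, _root_.map_add, add_mul, h, h']
  | tmul a b =>
    simp only [env_tmul_smul, Bialgebra.counit_mul, mul_one]
    ring

end Envelope

end LeftComodAlg

/-! ## Opposite comodule algebras -/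

section Flip

variable {k V W A C : Type*} [CommSemiring k] [AddCommMonoid V] [Module k V] [AddCommMonoid W]
  [Module k W] [AddCommMonoid A] [Module k A] [AddCommMonoid C] [Module k C]
  (η : V ≃ₗ[k] W) (θ : A ≃ₗ[k] C)

/-- The equivalence `v ⊗ a ↦ θ a ⊗ η v`. It exchanges left and right coactions. -/
noncomputable def swapCongr : V ⊗[k] A ≃ₗ[k] C ⊗[k] W :=
  (TensorProduct.comm k V A).trans (TensorProduct.congr θ η)

@[simp]
lemma swapCongr_tmul (v : V) (a : A) : swapCongr η θ (v ⊗ₜ a) = θ a ⊗ₜ η v := rfl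

/-- The left coaction `η v ↦ θ v₍₁₎ ⊗ η v₍₀₎` attached to a right coaction `f`. -/
noncomputable def flipCoact (f : V →ₗ[k] V ⊗[k] A) : W →ₗ[k] C ⊗[k] W :=
  (swapCongr η θ).toLinearMap ∘ₗ f ∘ₗ η.symm.toLinearMap

@[simp]
lemma flipCoact_apply (f : V →ₗ[k] V ⊗[k] A) (v : V) :
    flipCoact η θ f (η v) = swapCongr η θ (f v) := by
  simp [flipCoact]

lemma flipCoact_coassoc {f : V →ₗ[k] V ⊗[k] A} {c : A →ₗ[k] A ⊗[k] A}
    (hf : (TensorProduct.assoc k V A A).toLinearMap ∘ₗ f.rTensor A ∘ₗ f = c.lTensor V ∘ₗ f) :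
    (TensorProduct.assoc k C C W).toLinearMap ∘ₗ (flipCoact θ θ c).rTensor W ∘ₗ flipCoact η θ f =
      (flipCoact η θ f).lTensor C ∘ₗ flipCoact η θ f := by
  let reverse : V ⊗[k] (A ⊗[k] A) →ₗ[k] C ⊗[k] (C ⊗[k] W) :=
    (TensorProduct.assoc k C C W).toLinearMap ∘ₗ (swapCongr η (swapCongr θ θ)).toLinearMap
  have hc : (TensorProduct.assoc k C C W).toLinearMap ∘ₗ (flipCoact θ θ c).rTensor W ∘ₗ
      (swapCongr η θ).toLinearMap = reverse ∘ₗ c.lTensor V :=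
    TensorProduct.ext' fun v a => by simp [reverse]
  have hf' : (flipCoact η θ f).lTensor C ∘ₗ (swapCongr η θ).toLinearMap =
      reverse ∘ₗ (TensorProduct.assoc k V A A).toLinearMap ∘ₗ f.rTensor A := by
    refine TensorProduct.ext' fun v a => ?_
    simp only [LinearMap.comp_apply, LinearEquiv.coe_coe, swapCongr_tmul, LinearMap.lTensor_tmul,
      LinearMap.rTensor_tmul, flipCoact_apply]
    induction f v with
    | zero => simp
    | add t t' h h' => simp only [map_add, TensorProduct.add_tmul, TensorProduct.tmul_add, h, h']
    | tmul w b => simp [reverse]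
  refine LinearMap.ext fun w => ?_
  obtain ⟨v, rfl⟩ := η.surjective w
  have hcv := LinearMap.congr_fun hc (f v)
  have hfv := LinearMap.congr_fun hf' (f v)
  have hv := congrArg reverse (LinearMap.congr_fun hf v)
  simp only [LinearMap.comp_apply, LinearEquiv.coe_coe, flipCoact_apply] at hcv hfv hv ⊢
  rw [hcv, hfv, hv]

lemma map_flipCoact {P Q : Type*} [AddCommMonoid P] [Module k P] [AddCommMonoid Q] [Module k Q]
    (f : V →ₗ[k] V ⊗[k] A) (p : C →ₗ[k] P) (q : W →ₗ[k] Q) (v : V) :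
    TensorProduct.map p q (flipCoact η θ f (η v)) = TensorProduct.comm k Q P
      (TensorProduct.map (q ∘ₗ η.toLinearMap) (p ∘ₗ θ.toLinearMap) (f v)) := by
  rw [flipCoact_apply]
  induction f v with
  | zero => simp
  | add t t' h h' => simp only [map_add, h, h']
  | tmul w b => simp

end Flip

/-- The opposite of `A`, with the coopposite comultiplication. It is a type synonym because
`Aᵐᵒᵖ` carries the comultiplication of `A`. -/
def OpCop (A : Type u) : Type u := Aᵐᵒᵖ

namespace OpCop

variable (k A : Type u) [Field k] [Ring A]

instance : Ring (OpCop A) := inferInstanceAs (Ring Aᵐᵒᵖ)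

noncomputable instance [Algebra k A] : Algebra k (OpCop A) := inferInstanceAs (Algebra k Aᵐᵒᵖ)

/-- The linear identification of `A` with `OpCop A`. -/
def of [Algebra k A] : A ≃ₗ[k] OpCop A := MulOpposite.opLinearEquiv k

variable {k A}

@[simp]
lemma of_one [Algebra k A] : of k A 1 = 1 := rfl

lemma of_mul [Algebra k A] (a b : A) : of k A (a * b) = of k A b * of k A a := rfl

noncomputable instance [Bialgebra k A] : Coalgebra k (OpCop A) where
  comul := flipCoact (of k A) (of k A) Coalgebra.comul
  counit := Coalgebra.counit ∘ₗ (of k A).symm.toLinearMap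
  coassoc := flipCoact_coassoc _ _ Coalgebra.coassoc
  rTensor_counit_comp_comul := by
    refine LinearMap.ext fun x => ?_
    obtain ⟨a, rfl⟩ := (of k A).surjective x
    refine (map_flipCoact _ _ _ _ _ _).trans ?_
    have hcounit : TensorProduct.map (of k A).toLinearMap Coalgebra.counit (Coalgebra.comul a) =
        (of k A) a ⊗ₜ[k] (1 : k) := by
      rw [← LinearMap.rTensor_comp_lTensor, LinearMap.comp_apply, Coalgebra.lTensor_counit_comul]
      rfl
    exact congrArg (TensorProduct.comm k _ _) hcounit
  lTensor_counit_comp_comul := by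
    refine LinearMap.ext fun x => ?_
    obtain ⟨a, rfl⟩ := (of k A).surjective x
    refine (map_flipCoact _ _ _ _ _ _).trans ?_
    have hcounit : TensorProduct.map Coalgebra.counit (of k A).toLinearMap (Coalgebra.comul a) =
        (1 : k) ⊗ₜ[k] (of k A) a := by
      rw [← LinearMap.lTensor_comp_rTensor, LinearMap.comp_apply, Coalgebra.rTensor_counit_comul]
      rfl
    exact congrArg (TensorProduct.comm k _ _) hcounit

@[simp]
lemma counit_of [Bialgebra k A] (a : A) :
    Coalgebra.counit (R := k) (of k A a) = Coalgebra.counit (R := k) a := rfl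

lemma comul_of [Bialgebra k A] (a : A) :
    Coalgebra.comul (R := k) (of k A a) =
      swapCongr (of k A) (of k A) (Coalgebra.comul (R := k) a) := rfl

lemma swapCongr_mul {R S : Type*} [Ring R] [Algebra k R] [Ring S] [Algebra k S] [Algebra k A]
    (η : R ≃ₗ[k] S) (hη : ∀ x y, η (x * y) = η y * η x) (s t : R ⊗[k] A) :
    swapCongr η (of k A) (s * t) = swapCongr η (of k A) t * swapCongr η (of k A) s := by
  induction s with
  | zero => simp
  | add s s' h h' => simp only [map_add, add_mul, mul_add, h, h']
  | tmul x a =>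
    induction t with
    | zero => simp
    | add t t' h h' => simp only [map_add, add_mul, mul_add, h, h']
    | tmul y b => simp [hη, of_mul]

noncomputable instance [Bialgebra k A] : Bialgebra k (OpCop A) :=
  .mk' k (OpCop A) Bialgebra.counit_one
    (by
      intro x y
      obtain ⟨a, rfl⟩ := (of k A).surjective x
      obtain ⟨b, rfl⟩ := (of k A).surjective y
      rw [← of_mul, counit_of, counit_of, counit_of, Bialgebra.counit_mul, mul_comm])
    (by rw [← of_one (k := k), comul_of, Bialgebra.comul_one]; rfl)
    (by
      intro x y
      obtain ⟨a, rfl⟩ := (of k A).surjective x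
      obtain ⟨b, rfl⟩ := (of k A).surjective y
      rw [← of_mul, comul_of, comul_of, comul_of, Bialgebra.comul_mul,
        swapCongr_mul (of k A) of_mul])

lemma mul'_comm_map_of [Algebra k A] (t : A ⊗[k] A) :
    LinearMap.mul' k (OpCop A) (TensorProduct.comm k _ _
      (TensorProduct.map (of k A).toLinearMap (of k A).toLinearMap t)) =
        of k A (LinearMap.mul' k A t) := by
  induction t with
  | zero => simp
  | add t t' h h' => simp only [map_add, h, h']
  | tmul a b => simp [of_mul]

noncomputable instance [HopfAlgebra k A] : HopfAlgebra k (OpCop A) where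
  antipode := (of k A).toLinearMap ∘ₗ HopfAlgebra.antipode k ∘ₗ (of k A).symm.toLinearMap
  mul_antipode_rTensor_comul := by
    refine LinearMap.ext fun x => ?_
    obtain ⟨a, rfl⟩ := (of k A).surjective x
    have hmap := LinearMap.congr_fun (TensorProduct.map_comp (of k A).toLinearMap
      (of k A).toLinearMap LinearMap.id (HopfAlgebra.antipode k (A := A))) (Coalgebra.comul a)
    have hantipode := LinearMap.congr_fun (HopfAlgebra.mul_antipode_lTensor_comul (R := k)) a
    exact (congrArg _ (map_flipCoact _ _ _ _ _ _)).trans <|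
      (congrArg (fun t => LinearMap.mul' k _ (TensorProduct.comm k _ _ t)) hmap).trans <|
        (mul'_comm_map_of _).trans (congrArg (of k A) hantipode)
  mul_antipode_lTensor_comul := by
    refine LinearMap.ext fun x => ?_
    obtain ⟨a, rfl⟩ := (of k A).surjective x
    have hmap := LinearMap.congr_fun (TensorProduct.map_comp (of k A).toLinearMap
      (of k A).toLinearMap (HopfAlgebra.antipode k (A := A)) LinearMap.id) (Coalgebra.comul a)
    have hantipode := LinearMap.congr_fun (HopfAlgebra.mul_antipode_rTensor_comul (R := k)) a
    exact (congrArg _ (map_flipCoact _ _ _ _ _ _)).trans <|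
      (congrArg (fun t => LinearMap.mul' k _ (TensorProduct.comm k _ _ t)) hmap).trans <|
        (mul'_comm_map_of _).trans (congrArg (of k A) hantipode)

end OpCop

section Opposite

attribute [local instance] TensorProduct.Algebra.module envTower

lemma extPD_eq_of_ringEquiv {S T M N : Type u} [Ring S] [Ring T] [AddCommGroup M] [Module S M]
    [AddCommGroup N] [Module T N] (e : S ≃+* T) (φ : M ≃+ N)
    (hφ : ∀ (s : S) (m : M), φ (s • m) = e s • φ m) :
    extPD (ModuleCat.of S M) = extPD (ModuleCat.of T N) := by
  let : Module S N := Module.compHom N e.toRingHom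
  let ψ : M ≃ₗ[S] N := { φ with map_smul' := hφ }
  exact (extPD_eq_of_iso ψ.toModuleIso).trans
    (extPD_obj_equivalence (ModuleCat.restrictScalarsEquivalenceOfRingEquiv e) (ModuleCat.of T N))

/-- The isomorphism `x ⊗ y ↦ y ⊗ x` between the enveloping algebras of `R` and `Rᵐᵒᵖ`. -/
noncomputable def envOpEquiv (k R : Type u) [Field k] [Ring R] [Algebra k R] :
    R ⊗[k] Rᵐᵒᵖ ≃ₐ[k] Rᵐᵒᵖ ⊗[k] Rᵐᵒᵖᵐᵒᵖ :=
  (Algebra.TensorProduct.comm k R Rᵐᵒᵖ).trans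
    (Algebra.TensorProduct.congr .refl (AlgEquiv.opOp k R))

lemma cdAlg_op (k R : Type u) [Field k] [Ring R] [Algebra k R] : cdAlg k Rᵐᵒᵖ = cdAlg k R := by
  refine (extPD_eq_of_ringEquiv (envOpEquiv k R).toRingEquiv MulOpposite.opAddEquiv
    fun e z => ?_).symm
  induction e with
  | zero =>
    rw [_root_.map_zero]
    exact (congrArg MulOpposite.op (zero_smul (R ⊗[k] Rᵐᵒᵖ) z)).trans
      (zero_smul (Rᵐᵒᵖ ⊗[k] Rᵐᵒᵖᵐᵒᵖ) (MulOpposite.op z)).symm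
  | add e e' h h' => simp only [add_smul, _root_.map_add, h, h']
  | tmul x y =>
    change MulOpposite.op ((x ⊗ₜ[k] y) • z) =
      (y ⊗ₜ[k] MulOpposite.op (MulOpposite.op x)) • MulOpposite.op z
    simp [LeftComodAlg.env_tmul_smul, mul_assoc]

end Opposite

namespace RightComodAlg

variable {k A R : Type u} [Field k] [Ring A] [Bialgebra k A] [Ring R] [Algebra k R]

/-- A right `A`-comodule algebra `R`, seen as the left `OpCop A`-comodule algebra `Rᵐᵒᵖ`. -/
noncomputable def opCop (c : RightComodAlg k A R) : LeftComodAlg k (OpCop A) Rᵐᵒᵖ where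
  lam := flipCoact (MulOpposite.opLinearEquiv k) (OpCop.of k A) c.ρ
  coassoc := flipCoact_coassoc _ _ c.coassoc
  counit_comp := by
    refine LinearMap.ext fun z => ?_
    obtain ⟨x, rfl⟩ := (MulOpposite.opLinearEquiv k).surjective z
    have hρ : Coalgebra.counit.lTensor R (c.ρ x) = x ⊗ₜ[k] (1 : k) := by
      simpa using congrArg (TensorProduct.rid k R).symm (LinearMap.congr_fun c.counit_comp x)
    have hcounit : TensorProduct.map (MulOpposite.opLinearEquiv k).toLinearMap Coalgebra.counit
        (c.ρ x) = MulOpposite.op x ⊗ₜ[k] (1 : k) := by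
      rw [← LinearMap.rTensor_comp_lTensor, LinearMap.comp_apply, hρ]
      rfl
    refine (congrArg (TensorProduct.lid k _) (map_flipCoact _ _ _ _ _ _)).trans ?_
    exact (congrArg (fun t => TensorProduct.lid k _ (TensorProduct.comm k _ _ t)) hcounit).trans
      (by simp)
  map_one := congrArg (swapCongr (MulOpposite.opLinearEquiv k) (OpCop.of k A)) c.map_one
  map_mul x y :=
    (congrArg (swapCongr (MulOpposite.opLinearEquiv k) (OpCop.of k A))
      (c.map_mul y.unop x.unop)).trans <|
      OpCop.swapCongr_mul (MulOpposite.opLinearEquiv k) MulOpposite.op_mul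
        (c.ρ y.unop) (c.ρ x.unop)

lemma can_opCop_comp_swapCongr (c : RightComodAlg k A R) :
    c.opCop.can ∘ₗ (swapCongr (MulOpposite.opLinearEquiv k)
      (MulOpposite.opLinearEquiv k : R ≃ₗ[k] Rᵐᵒᵖ)).toLinearMap =
      (swapCongr (MulOpposite.opLinearEquiv k) (OpCop.of k A)).toLinearMap ∘ₗ c.can := by
  refine TensorProduct.ext' fun y x => ?_
  have hlam : c.opCop.lam (MulOpposite.opLinearEquiv k x) =
      swapCongr (MulOpposite.opLinearEquiv k) (OpCop.of k A) (c.ρ x) := rfl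
  simp only [LinearMap.comp_apply, LinearEquiv.coe_coe, swapCongr_tmul, LeftComodAlg.can, can,
    LinearMap.rTensor_tmul, LinearMap.lTensor_tmul, hlam]
  induction c.ρ x with
  | zero => simp
  | add t t' h h' => simp only [map_add, TensorProduct.add_tmul, TensorProduct.tmul_add, h, h']
  | tmul x a => simp

lemma IsGalois.opCop {c : RightComodAlg k A R} (hc : c.IsGalois) : c.opCop.IsGalois := by
  have := hc.1
  have hcan := congrArg DFunLike.coe c.can_opCop_comp_swapCongr
  rw [LinearMap.coe_comp, LinearMap.coe_comp] at hcan
  exact ⟨inferInstance, (Function.Bijective.of_comp_iff _ (LinearEquiv.bijective _)).1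
    (hcan ▸ (LinearEquiv.bijective _).comp hc.2)⟩

end RightComodAlg

lemma cdHopf_opCop (k A : Type u) [Field k] [Ring A] [HopfAlgebra k A] :
    cdHopf k (OpCop A) = cdHopf k A :=
  (LeftComodAlg.cdAlg_eq_cdHopf k (OpCop A)).symm.trans <|
    (cdAlg_op k A).trans (LeftComodAlg.cdAlg_eq_cdHopf k A)

end QuesProj

theorem cd_eq_cd_galois_of_cosemisimple_general (k A R : Type u) [Field k]
    [Ring A] [HopfAlgebra k A] [Ring R] [Algebra k R]
    (hfin : cdHopf k A ≠ ⊤)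
    (hGalois : IsGaloisObject k A R) :
    cdHopf k A = cdAlg k R := by
  obtain ⟨c, hc⟩ | ⟨c, hc⟩ := hGalois
  · exact (hc.cdAlg_eq_cdHopf_of_ne_top hfin).symm
  · rw [← cdHopf_opCop] at hfin ⊢
    exact ((cdAlg_op k R).symm.trans (hc.opCop.cdAlg_eq_cdHopf_of_ne_top hfin)).symm

/-- If `A` is a cosemisimple Hopf algebra of finite cohomological
dimension and `R` is a left or right `A`-Galois object, then `cd(A) = cd(R)`. -/
theorem cd_eq_cd_galois_of_cosemisimple (k A R : Type u) [Field k] [IsAlgClosed k]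
    [Ring A] [HopfAlgebra k A] [Ring R] [Algebra k R]
    (hcosemisimple : IsCosemisimple k A)
    (hfin : cdHopf k A ≠ ⊤)
    (hGalois : IsGaloisObject k A R) :
    cdHopf k A = cdAlg k R :=
  cd_eq_cd_galois_of_cosemisimple_general k A R hfin hGalois
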